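/- Let β ∈ (0,n) and f ∈ L^1(H^β_∞). Then there exists a constant C = C(β,n) > 0 such that for all t > 0, H^β_∞({x ∈ ℝ^n : M_{H^β_∞} f(x) > t}) ≤ (C/t) ∫ |f| dH^β_∞. -/

import Mathlib

open scoped ENNReal
open Metric Set MeasureTheory

noncomputable section

/-- `ℝⁿ` as Euclidean space. -/
abbrev Rn (n : ℕ) := EuclideanSpace ℝ (Fin n)

/-- The Choquet integral of a nonnegative function `g` with respect to a
(monotone) set function `C`: `∫ g dC := ∫_0^∞ C({g > t}) dt`. -/
noncomputable def choquet {X : Type*} (C : Set X → ℝ≥0∞) (g : X → ℝ≥0∞) : ℝ≥0∞ :=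
  ∫⁻ t in Ioi (0 : ℝ), C {x | ENNReal.ofReal t < g x}

/-- The Choquet integral of `g` restricted to a set `A`. -/
noncomputable def choquetOn {X : Type*} (C : Set X → ℝ≥0∞) (A : Set X) (g : X → ℝ≥0∞) : ℝ≥0∞ :=
  ∫⁻ t in Ioi (0 : ℝ), C {x | x ∈ A ∧ ENNReal.ofReal t < g x}

/-- The `L^∞(C)` norm: `inf {λ > 0 : C({|f| > λ}) = 0}` (formulated in `ℝ≥0∞`). -/
noncomputable def choquetEssSup {X : Type*} (C : Set X → ℝ≥0∞) (f : X → ℝ) : ℝ≥0∞ :=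
  sInf {l : ℝ≥0∞ | C {x | l < ENNReal.ofReal |f x|} = 0}

/-- `C`-quasicontinuity of a function `f`. -/
def QuasiCont {X : Type*} [TopologicalSpace X] (C : Set X → ℝ≥0∞) (f : X → ℝ) : Prop :=
  ∀ ε : ℝ≥0∞, 0 < ε → ∃ U : Set X, IsOpen U ∧ C U < ε ∧ ContinuousOn f Uᶜ

/-- Membership in the capacitary space `L^p(C)`: `C`-quasicontinuous with
finite `p`-th power Choquet integral. -/
def MemChoquetLp {X : Type*} [TopologicalSpace X] (C : Set X → ℝ≥0∞) (p : ℝ) (f : X → ℝ) : Prop :=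
  QuasiCont C f ∧ choquet C (fun x => ENNReal.ofReal |f x| ^ p) < ∞

/-- The normalization constant `ω_β = π^{β/2}/Γ(β/2+1)`. -/
noncomputable def omegaC (β : ℝ) : ℝ≥0∞ :=
  ENNReal.ofReal (Real.pi ^ (β / 2) / Real.Gamma (β / 2 + 1))

/-- The `β`-dimensional Hausdorff content `H^β_∞`, defined via countable
coverings by balls: `inf {∑ ω_β r_i^β : E ⊆ ⋃ B(x_i, r_i)}`. -/
noncomputable def hContent (n : ℕ) (β : ℝ) (E : Set (Rn n)) : ℝ≥0∞ :=
  ⨅ (c : ℕ → Rn n × ℝ) (_ : E ⊆ ⋃ i, ball (c i).1 (c i).2),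
    ∑' i, omegaC β * ENNReal.ofReal ((c i).2 ^ β)

/-- The centered Hausdorff content maximal function
`M_{H^β_∞} g(x) := sup_{r>0} (1/(ω_β r^β)) ∫_{B(x,r)} g dH^β_∞`. -/
noncomputable def maximalH (n : ℕ) (β : ℝ) (g : Rn n → ℝ≥0∞) (x : Rn n) : ℝ≥0∞ :=
  ⨆ (r : ℝ) (_ : 0 < r),
    (omegaC β * ENNReal.ofReal (r ^ β))⁻¹ * choquetOn (hContent n β) (ball x r) g

/-!
Cover each dyadic superlevel set `{g > τ 2ᵏ}` almost optimally by balls, and put at the center of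
each ball the atom of mass `τ 2ᵏ ω_β ρ^β`. The resulting measure `μ` has total mass about twice
the Choquet integral of `g` at most. The doubled balls carry little content. At a point `x` outside all of
them, a covering ball meeting `ball x r` has its center within `2r` of `x`, so the Choquet integral
over `ball x r` is controlled, up to the contribution of the levels below `τ`, by
`μ (closedBall x (2 * r))`. Hence where the content maximal function exceeds `2τ` the fractional
maximal function of `μ` is at least `τ`, and Vitali's covering lemma bounds the content of that set.
-/

/-! ### The cost of a ball -/

/-- The cost `ω_β r^β` of a ball of radius `r` in the definition of the Hausdorff content. -/
def ballCost (β r : ℝ) : ℝ≥0∞ := omegaC β * ENNReal.ofReal (r ^ β)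

lemma omegaC_pos {β : ℝ} (hβ : 0 < β) : 0 < omegaC β := by
  have : 0 < Real.Gamma (β / 2 + 1) := Real.Gamma_pos_of_pos (by positivity)
  exact ENNReal.ofReal_pos.2 (by positivity)

lemma omegaC_ne_top (β : ℝ) : omegaC β ≠ ∞ := ENNReal.ofReal_ne_top

lemma ballCost_zero {β : ℝ} (hβ : β ≠ 0) : ballCost β 0 = 0 := by
  simp [ballCost, Real.zero_rpow hβ]

lemma ballCost_pos {β r : ℝ} (hβ : 0 < β) (hr : 0 < r) : 0 < ballCost β r :=
  ENNReal.mul_pos (omegaC_pos hβ).ne' (ENNReal.ofReal_pos.2 (Real.rpow_pos_of_pos hr β)).ne'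

lemma ballCost_ne_top (β r : ℝ) : ballCost β r ≠ ∞ :=
  ENNReal.mul_ne_top (omegaC_ne_top β) ENNReal.ofReal_ne_top

lemma ballCost_mul (β : ℝ) {a r : ℝ} (ha : 0 ≤ a) (hr : 0 ≤ r) :
    ballCost β (a * r) = ENNReal.ofReal (a ^ β) * ballCost β r := by
  rw [ballCost, ballCost, Real.mul_rpow ha hr, ENNReal.ofReal_mul (Real.rpow_nonneg ha β),
    mul_left_comm]

lemma bddAbove_setOf_mul_ballCost_le {β : ℝ} (hβ : 0 < β) {τ S : ℝ≥0∞} (hτ : τ ≠ 0)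
    (hS : S ≠ ∞) : BddAbove {r : ℝ | τ * ballCost β r ≤ S} := by
  have hτω : τ * omegaC β ≠ 0 := mul_ne_zero hτ (omegaC_pos hβ).ne'
  have hbound : (S / (τ * omegaC β)) ^ β⁻¹ ≠ ∞ :=
    ENNReal.rpow_ne_top_of_nonneg (inv_nonneg.2 hβ.le) (ENNReal.div_ne_top hS hτω)
  refine ⟨((S / (τ * omegaC β)) ^ β⁻¹).toReal, fun r (hr : τ * ballCost β r ≤ S) => ?_⟩
  rcases le_total r 0 with hr0 | hr0
  · exact hr0.trans ENNReal.toReal_nonneg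
  · rwa [← ENNReal.ofReal_le_iff_le_toReal hbound, ENNReal.le_rpow_inv_iff hβ,
      ENNReal.ofReal_rpow_of_nonneg hr0 hβ.le,
      ENNReal.le_div_iff_mul_le (Or.inl hτω) (Or.inr hS), mul_comm, mul_assoc]

/-! ### Hausdorff content as an outer measure -/

lemma hContent_mono (n : ℕ) (β : ℝ) : Monotone (hContent n β) := fun _ _ hEF =>
  le_iInf₂ fun c hc => iInf₂_le c (hEF.trans hc)

lemma hContent_le_tsum_nat {n : ℕ} {β : ℝ} {E : Set (Rn n)} {x : ℕ → Rn n} {r : ℕ → ℝ}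
    (hE : E ⊆ ⋃ i, ball (x i) (r i)) : hContent n β E ≤ ∑' i, ballCost β (r i) :=
  iInf₂_le (fun i => (x i, r i)) hE

lemma hContent_ball_le {n : ℕ} {β : ℝ} (hβ : β ≠ 0) (x : Rn n) (r : ℝ) :
    hContent n β (ball x r) ≤ ballCost β r := by
  let ρ : ℕ → ℝ := Pi.single 0 r
  have hρ : ∀ i ≠ 0, ballCost β (ρ i) = 0 := fun i hi => by
    simp only [ρ, Pi.single_eq_of_ne hi, ballCost_zero hβ]
  calc hContent n β (ball x r) ≤ ∑' i, ballCost β (ρ i) :=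
        hContent_le_tsum_nat (x := fun _ => x) (subset_iUnion_of_subset 0 subset_rfl)
    _ = ballCost β r := tsum_eq_single 0 hρ

lemma exists_cover_of_hContent_lt {n : ℕ} {β : ℝ} (hβ : β ≠ 0) {E : Set (Rn n)} {M : ℝ≥0∞}
    (hE : hContent n β E < M) :
    ∃ (x : ℕ → Rn n) (r : ℕ → ℝ), (∀ i, 0 ≤ r i) ∧ (E ⊆ ⋃ i, ball (x i) (r i)) ∧
      ∑' i, ballCost β (r i) < M := by
  simp only [hContent, iInf_lt_iff] at hE
  obtain ⟨c, hcover, hcost⟩ := hE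
  refine ⟨fun i => (c i).1, fun i => max (c i).2 0, fun i => le_max_right _ _,
    hcover.trans (iUnion_mono fun i => ball_subset_ball (le_max_left _ _)),
    (ENNReal.tsum_le_tsum fun i => ?_).trans_lt hcost⟩
  rcases le_total (c i).2 0 with hneg | hnonneg
  · simp only [max_eq_right hneg, ballCost_zero hβ, zero_le]
  · simp only [max_eq_left hnonneg, ballCost, le_refl]

lemma hContent_iUnion_nat_le {n : ℕ} {β : ℝ} (hβ : β ≠ 0) (E : ℕ → Set (Rn n)) :
    hContent n β (⋃ k, E k) ≤ ∑' k, hContent n β (E k) := by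
  refine ENNReal.le_of_forall_pos_le_add fun ε hε hfin => ?_
  obtain ⟨δ, hδ, hδε⟩ := ENNReal.exists_pos_sum_of_countable' (ENNReal.coe_ne_zero.2 hε.ne') ℕ
  choose x r _ hcover hcost using fun k => exists_cover_of_hContent_lt hβ
    (ENNReal.lt_add_right (ENNReal.ne_top_of_tsum_ne_top hfin.ne k) (hδ k).ne')
  let e : ℕ ≃ ℕ × ℕ := Nat.pairEquiv.symm
  have hE : ⋃ k, E k ⊆ ⋃ j, ball (x (e j).1 (e j).2) (r (e j).1 (e j).2) := by
    rw [e.surjective.iUnion_comp fun p => ball (x p.1 p.2) (r p.1 p.2), iUnion_prod']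
    exact iUnion_mono hcover
  calc hContent n β (⋃ k, E k) ≤ ∑' j, ballCost β (r (e j).1 (e j).2) := hContent_le_tsum_nat hE
    _ = ∑' k, ∑' i, ballCost β (r k i) := by
        rw [e.tsum_eq fun p => ballCost β (r p.1 p.2), ENNReal.tsum_prod']
    _ ≤ ∑' k, (hContent n β (E k) + δ k) := ENNReal.tsum_le_tsum fun k => (hcost k).le
    _ ≤ ∑' k, hContent n β (E k) + ε := by
        rw [ENNReal.tsum_add]
        gcongr

/-- The Hausdorff content bundled as an outer measure, which gives access to the library's
subadditivity lemmas. -/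
def hContentOuterMeasure (n : ℕ) {β : ℝ} (hβ : β ≠ 0) : OuterMeasure (Rn n) where
  measureOf := hContent n β
  empty := le_bot_iff.1 <| by
    simpa [ballCost_zero hβ] using hContent_ball_le hβ (0 : Rn n) 0
  mono hEF := hContent_mono n β hEF
  iUnion_nat E _ := hContent_iUnion_nat_le hβ E

lemma hContent_union_le {n : ℕ} {β : ℝ} (hβ : β ≠ 0) (E F : Set (Rn n)) :
    hContent n β (E ∪ F) ≤ hContent n β E + hContent n β F :=
  measure_union_le (μ := hContentOuterMeasure n hβ) E F

lemma hContent_iUnion_le {n : ℕ} {β : ℝ} (hβ : β ≠ 0) {ι : Type*} [Countable ι]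
    (E : ι → Set (Rn n)) : hContent n β (⋃ i, E i) ≤ ∑' i, hContent n β (E i) :=
  measure_iUnion_le (μ := hContentOuterMeasure n hβ) E

lemma hContent_le_tsum {n : ℕ} {β : ℝ} (hβ : β ≠ 0) {ι : Type*} [Countable ι] {E : Set (Rn n)}
    {x : ι → Rn n} {r : ι → ℝ} (hE : E ⊆ ⋃ i, ball (x i) (r i)) :
    hContent n β E ≤ ∑' i, ballCost β (r i) :=
  calc hContent n β E ≤ hContent n β (⋃ i, ball (x i) (r i)) := hContent_mono n β hE
    _ ≤ ∑' i, hContent n β (ball (x i) (r i)) := hContent_iUnion_le hβ _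
    _ ≤ ∑' i, ballCost β (r i) := ENNReal.tsum_le_tsum fun i => hContent_ball_le hβ (x i) (r i)

/-! ### Dyadic discretization of the Choquet integral -/

/-- The dyadic sum `∑ₖ τ 2ᵏ φ(τ 2ᵏ)`, a discretization of `∫₀^∞ φ` for antitone `φ` that discards
the arguments below `τ`. -/
def dyadicSum (τ : ℝ) (φ : ℝ → ℝ≥0∞) : ℝ≥0∞ :=
  ∑' k : ℕ, ENNReal.ofReal (τ * 2 ^ k) * φ (τ * 2 ^ k)

lemma lintegral_Ioi_eq_tsum_dyadic {τ : ℝ} (hτ : 0 < τ) (φ : ℝ → ℝ≥0∞) :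
    ∫⁻ s in Ioi τ, φ s = ∑' k : ℕ, ∫⁻ s in Ioc (τ * 2 ^ k) (τ * 2 ^ (k + 1)), φ s := by
  have hmono : Monotone fun k : ℕ => τ * 2 ^ k :=
    (pow_right_mono₀ one_le_two).const_mul hτ.le
  have hunbdd : ¬BddAbove (range fun k : ℕ => τ * 2 ^ k) :=
    Filter.not_bddAbove_of_tendsto_atTop
      ((tendsto_pow_atTop_atTop_of_one_lt one_lt_two).const_mul_atTop hτ)
  have hunion := iUnion_Ioc_map_succ_eq_Ioi (fun k => hmono bot_le) hunbdd
  simp only [Nat.bot_eq_zero, pow_zero, mul_one, Nat.succ_eq_succ, Nat.succ_eq_add_one] at hunion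
  rw [← hunion]
  exact lintegral_iUnion (fun _ => measurableSet_Ioc) hmono.pairwise_disjoint_on_Ioc_succ φ

lemma setLIntegral_Ioc_le_of_antitone {φ : ℝ → ℝ≥0∞} (hφ : Antitone φ) (a b : ℝ) :
    ∫⁻ s in Ioc a b, φ s ≤ ENNReal.ofReal (b - a) * φ a :=
  calc ∫⁻ s in Ioc a b, φ s ≤ ∫⁻ _ in Ioc a b, φ a :=
        setLIntegral_mono' measurableSet_Ioc fun _ hs => hφ hs.1.le
    _ = ENNReal.ofReal (b - a) * φ a := by rw [setLIntegral_const, Real.volume_Ioc, mul_comm]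

lemma le_setLIntegral_Ioc_of_antitone {φ : ℝ → ℝ≥0∞} (hφ : Antitone φ) (a b : ℝ) :
    ENNReal.ofReal (b - a) * φ b ≤ ∫⁻ s in Ioc a b, φ s :=
  calc ENNReal.ofReal (b - a) * φ b = ∫⁻ _ in Ioc a b, φ b := by
        rw [setLIntegral_const, Real.volume_Ioc, mul_comm]
    _ ≤ ∫⁻ s in Ioc a b, φ s := setLIntegral_mono' measurableSet_Ioc fun _ hs => hφ hs.2

lemma dyadicSum_le_two_mul_lintegral {φ : ℝ → ℝ≥0∞} (hφ : Antitone φ) {τ : ℝ} (hτ : 0 < τ) :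
    dyadicSum τ φ ≤ 2 * ∫⁻ s in Ioi (0 : ℝ), φ s := by
  have hterm (k : ℕ) : ENNReal.ofReal (τ * 2 ^ k) * φ (τ * 2 ^ k) ≤
      2 * ∫⁻ s in Ioc (τ / 2 * 2 ^ k) (τ / 2 * 2 ^ (k + 1)), φ s := by
    have hright : τ / 2 * 2 ^ (k + 1) = τ * 2 ^ k := by ring
    have hlength : τ * 2 ^ k = 2 * (τ * 2 ^ k - τ / 2 * 2 ^ k) := by ring
    calc ENNReal.ofReal (τ * 2 ^ k) * φ (τ * 2 ^ k)
        = 2 * (ENNReal.ofReal (τ * 2 ^ k - τ / 2 * 2 ^ k) * φ (τ * 2 ^ k)) := by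
          rw [hlength, ENNReal.ofReal_mul zero_le_two, ← hlength, ENNReal.ofReal_ofNat, mul_assoc]
      _ ≤ 2 * ∫⁻ s in Ioc (τ / 2 * 2 ^ k) (τ / 2 * 2 ^ (k + 1)), φ s := by
          rw [hright]
          gcongr
          exact le_setLIntegral_Ioc_of_antitone hφ _ _
  calc dyadicSum τ φ
      ≤ ∑' k : ℕ, 2 * ∫⁻ s in Ioc (τ / 2 * 2 ^ k) (τ / 2 * 2 ^ (k + 1)), φ s :=
        ENNReal.tsum_le_tsum hterm
    _ = 2 * ∫⁻ s in Ioi (τ / 2), φ s := by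
        rw [ENNReal.tsum_mul_left, lintegral_Ioi_eq_tsum_dyadic (half_pos hτ)]
    _ ≤ 2 * ∫⁻ s in Ioi (0 : ℝ), φ s := by
        gcongr
        exact (half_pos hτ).le

lemma lintegral_le_add_dyadicSum {φ : ℝ → ℝ≥0∞} (hφ : Antitone φ) {τ : ℝ} (hτ : 0 < τ) :
    ∫⁻ s in Ioi (0 : ℝ), φ s ≤ ENNReal.ofReal τ * φ 0 + dyadicSum τ φ := by
  rw [← Ioc_union_Ioi_eq_Ioi hτ.le]
  refine (lintegral_union_le _ _ _).trans (add_le_add ?_ ?_)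
  · simpa only [sub_zero] using setLIntegral_Ioc_le_of_antitone hφ 0 τ
  · rw [lintegral_Ioi_eq_tsum_dyadic hτ]
    refine ENNReal.tsum_le_tsum fun k => ?_
    have hlength : τ * 2 ^ (k + 1) - τ * 2 ^ k = τ * 2 ^ k := by ring
    simpa only [hlength] using
      setLIntegral_Ioc_le_of_antitone hφ (τ * 2 ^ k) (τ * 2 ^ (k + 1))

lemma antitone_setOf_ofReal_lt {X : Type*} (g : X → ℝ≥0∞) :
    Antitone fun s : ℝ => {x | ENNReal.ofReal s < g x} := fun _ _ hst _ hx =>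
  (ENNReal.ofReal_le_ofReal hst).trans_lt hx

lemma dyadicSum_le_two_mul_choquet {X : Type*} {C : Set X → ℝ≥0∞} (hC : Monotone C)
    (g : X → ℝ≥0∞) {τ : ℝ} (hτ : 0 < τ) :
    dyadicSum τ (fun s => C {x | ENNReal.ofReal s < g x}) ≤ 2 * choquet C g :=
  dyadicSum_le_two_mul_lintegral (hC.comp_antitone (antitone_setOf_ofReal_lt g)) hτ

lemma choquetOn_le_add_dyadicSum {X : Type*} {C : Set X → ℝ≥0∞} (hC : Monotone C) (A : Set X)
    (g : X → ℝ≥0∞) {τ : ℝ} (hτ : 0 < τ) :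
    choquetOn C A g ≤
      ENNReal.ofReal τ * C A + dyadicSum τ fun s => C (A ∩ {x | ENNReal.ofReal s < g x}) := by
  have hanti : Antitone fun s : ℝ => C (A ∩ {x | ENNReal.ofReal s < g x}) :=
    hC.comp_antitone fun _ _ hst => inter_subset_inter_right A (antitone_setOf_ofReal_lt g hst)
  refine (lintegral_le_add_dyadicSum hanti hτ).trans ?_
  gcongr
  exact hC inter_subset_left

/-! ### Content of the points where a measure is concentrated -/

lemma exists_countable_disjoint_closedBall_subset_iUnion_ball {α : Type*} [PseudoMetricSpace α]
    [TopologicalSpace.SeparableSpace α] {A : Set α} {r : α → ℝ} (hr : ∀ x ∈ A, 0 < r x)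
    (hbdd : BddAbove (r '' A)) :
    ∃ u ⊆ A, u.Countable ∧ u.PairwiseDisjoint (fun x => closedBall x (r x)) ∧
      A ⊆ ⋃ x : u, ball (x : α) (5 * r x) := by
  obtain ⟨R, hR⟩ := hbdd
  obtain ⟨u, huA, hdisj, hcover⟩ :=
    Vitali.exists_disjoint_subfamily_covering_enlargement_closedBall A id r R
      (fun x hx => hR (mem_image_of_mem r hx)) 4 (by norm_num)
  refine ⟨u, huA, hdisj.countable_of_nonempty_interior fun x hx => ?_, hdisj, fun x hx => ?_⟩
  · exact (nonempty_ball.2 (hr x (huA hx))).mono ball_subset_interior_closedBall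
  · obtain ⟨y, hy, hxy⟩ := hcover x hx
    have hry : 4 * r y < 5 * r y := by linarith [hr y (huA hy)]
    exact mem_iUnion.2 ⟨⟨y, hy⟩,
      closedBall_subset_ball hry (hxy (mem_closedBall_self (hr x hx).le))⟩

lemma mul_hContent_le_of_forall_exists_le_measure_closedBall {n : ℕ} {β : ℝ} (hβ : 0 < β)
    (μ : Measure (Rn n)) {τ : ℝ≥0∞} {a : ℝ} (ha : 0 < a) {A : Set (Rn n)}
    (hA : ∀ x ∈ A, ∃ r : ℝ, 0 < r ∧ τ * ballCost β r ≤ μ (closedBall x (a * r))) :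
    τ * hContent n β A ≤ ENNReal.ofReal ((5 * a) ^ β) * μ univ := by
  rcases eq_or_ne τ 0 with rfl | hτ
  · simp only [zero_mul, zero_le]
  rcases eq_or_ne (μ univ) ∞ with hμ | hμ
  · rw [hμ, ENNReal.mul_top (ENNReal.ofReal_pos.2 (by positivity)).ne']
    exact le_top
  choose! r hr hrμ using hA
  have hbdd : BddAbove ((fun x => a * r x) '' A) := by
    obtain ⟨R, hR⟩ := bddAbove_setOf_mul_ballCost_le hβ hτ hμ
    refine ⟨a * R, forall_mem_image.2 fun x hx => ?_⟩
    have : r x ≤ R := hR ((hrμ x hx).trans (measure_mono (subset_univ _)))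
    gcongr
  obtain ⟨u, huA, hu, hdisj, hcover⟩ := exists_countable_disjoint_closedBall_subset_iUnion_ball
    (fun x hx => mul_pos ha (hr x hx)) hbdd
  have : Countable u := hu
  calc τ * hContent n β A ≤ τ * ∑' x : u, ballCost β (5 * (a * r x)) := by
        gcongr
        exact hContent_le_tsum hβ.ne' hcover
    _ = ENNReal.ofReal ((5 * a) ^ β) * ∑' x : u, τ * ballCost β (r x) := by
        rw [← ENNReal.tsum_mul_left, ← ENNReal.tsum_mul_left]
        refine tsum_congr fun x => ?_
        rw [← mul_assoc 5, ballCost_mul β (by positivity) (hr x (huA x.2)).le, mul_left_comm]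
    _ ≤ ENNReal.ofReal ((5 * a) ^ β) * ∑' x : u, μ (closedBall (x : Rn n) (a * r x)) := by
        gcongr with x
        exact hrμ x (huA x.2)
    _ ≤ ENNReal.ofReal ((5 * a) ^ β) * μ univ := by
        gcongr
        exact tsum_measure_le_measure_univ (fun _ => measurableSet_closedBall.nullMeasurableSet)
          fun x y hxy => (hdisj x.2 y.2 (Subtype.coe_injective.ne hxy)).aedisjoint

/-! ### The measure carried by the centers of a covering -/

/-- The measure carried by the centers of a family of balls, in which each ball contributes an atom
of mass equal to its cost. -/
def centerMeasure {n : ℕ} (β : ℝ) {ι : Type*} (z : ι → Rn n) (ρ : ι → ℝ) : Measure (Rn n) :=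
  Measure.sum fun i => ballCost β (ρ i) • Measure.dirac (z i)

section CenterMeasure

variable {n : ℕ} {ι : Type*} {z : ι → Rn n} {ρ : ι → ℝ}

lemma centerMeasure_apply (β : ℝ) {s : Set (Rn n)} (hs : MeasurableSet s) :
    centerMeasure β z ρ s = ∑' i : z ⁻¹' s, ballCost β (ρ i) := by
  rw [centerMeasure, Measure.sum_apply _ hs, tsum_subtype (z ⁻¹' s) fun i => ballCost β (ρ i)]
  refine tsum_congr fun i => ?_
  by_cases hi : z i ∈ s <;> simp [Measure.dirac_apply' _ hs, hi]

lemma centerMeasure_univ (β : ℝ) (z : ι → Rn n) (ρ : ι → ℝ) :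
    centerMeasure β z ρ univ = ∑' i, ballCost β (ρ i) := by
  rw [centerMeasure_apply β .univ, preimage_univ, tsum_univ fun i => ballCost β (ρ i)]

lemma hContent_iUnion_ball_mul_le [Countable ι] {β : ℝ} (hβ : β ≠ 0) {a : ℝ} (ha : 0 ≤ a)
    (hρ : ∀ i, 0 ≤ ρ i) :
    hContent n β (⋃ i, ball (z i) (a * ρ i)) ≤
      ENNReal.ofReal (a ^ β) * centerMeasure β z ρ univ := by
  rw [centerMeasure_univ, ← ENNReal.tsum_mul_left]
  refine (hContent_le_tsum hβ subset_rfl).trans_eq (tsum_congr fun i => ?_)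
  exact ballCost_mul β ha (hρ i)

lemma hContent_ball_inter_le_centerMeasure [Countable ι] {β : ℝ} (hβ : β ≠ 0) {E : Set (Rn n)}
    (hE : E ⊆ ⋃ i, ball (z i) (ρ i)) {x : Rn n} (hx : x ∉ ⋃ i, ball (z i) (2 * ρ i)) (r : ℝ) :
    hContent n β (ball x r ∩ E) ≤ centerMeasure β z ρ (closedBall x (2 * r)) := by
  rw [centerMeasure_apply β measurableSet_closedBall]
  refine hContent_le_tsum hβ (x := fun i : z ⁻¹' closedBall x (2 * r) => z i) fun y ⟨hyx, hyE⟩ => ?_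
  obtain ⟨i, hyi⟩ := mem_iUnion.1 (hE hyE)
  have hfar : 2 * ρ i ≤ dist x (z i) := not_lt.1 fun h => hx (mem_iUnion.2 ⟨i, h⟩)
  have hnear : z i ∈ closedBall x (2 * r) := by
    rw [mem_ball] at hyx hyi
    rw [mem_closedBall']
    linarith [dist_triangle_left x (z i) y]
  exact mem_iUnion.2 ⟨⟨i, hnear⟩, hyi⟩

end CenterMeasure

/-! ### Coverings of the dyadic superlevel sets -/

/-- A choice, for every `k`, of a covering of the superlevel set `{g > τ 2ᵏ}` by countably many
balls. Negative radii are excluded because `ρ ^ β` is a junk value there. -/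
structure DyadicCover (n : ℕ) (g : Rn n → ℝ≥0∞) (τ : ℝ) where
  center : ℕ → ℕ → Rn n
  radius : ℕ → ℕ → ℝ
  radius_nonneg : ∀ k i, 0 ≤ radius k i
  superlevel_subset : ∀ k, {x | ENNReal.ofReal (τ * 2 ^ k) < g x} ⊆
    ⋃ i, ball (center k i) (radius k i)

namespace DyadicCover

variable {n : ℕ} {g : Rn n → ℝ≥0∞} {τ : ℝ}

/-- The sum over the levels of the center measures of the coverings, weighted by the heights
`τ 2ᵏ`. -/
def measure (c : DyadicCover n g τ) (β : ℝ) : Measure (Rn n) :=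
  Measure.sum fun k => ENNReal.ofReal (τ * 2 ^ k) • centerMeasure β (c.center k) (c.radius k)

/-- The union of all the balls of the coverings, with radii doubled. -/
def doubled (c : DyadicCover n g τ) : Set (Rn n) :=
  ⋃ k, ⋃ i, ball (c.center k i) (2 * c.radius k i)

lemma measure_apply (c : DyadicCover n g τ) (β : ℝ) {s : Set (Rn n)} (hs : MeasurableSet s) :
    c.measure β s =
      ∑' k, ENNReal.ofReal (τ * 2 ^ k) * centerMeasure β (c.center k) (c.radius k) s := by
  simp only [measure, Measure.sum_apply _ hs, Measure.smul_apply, smul_eq_mul]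

lemma exists_measure_univ_lt {β : ℝ} (hβ : β ≠ 0) (hτ : 0 < τ) {M : ℝ≥0∞}
    (hM : dyadicSum τ (fun s => hContent n β {x | ENNReal.ofReal s < g x}) < M) :
    ∃ c : DyadicCover n g τ, c.measure β univ < M := by
  set E : ℕ → Set (Rn n) := fun k => {x | ENNReal.ofReal (τ * 2 ^ k) < g x}
  set S := dyadicSum τ fun s => hContent n β {x | ENNReal.ofReal s < g x} with hS
  have hfin (k : ℕ) : hContent n β (E k) ≠ ∞ :=
    (ENNReal.lt_top_of_mul_ne_top_right (ENNReal.ne_top_of_tsum_ne_top hM.ne_top k)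
      (ENNReal.ofReal_pos.2 (by positivity)).ne').ne
  obtain ⟨δ, hδ, hδM⟩ := ENNReal.exists_pos_tsum_mul_lt_of_countable (tsub_pos_of_lt hM).ne'
    (fun k : ℕ => ENNReal.ofReal (τ * 2 ^ k)) fun _ => ENNReal.ofReal_ne_top
  choose z ρ hρ hcover hcost using fun k => exists_cover_of_hContent_lt hβ
    (ENNReal.lt_add_right (hfin k) (ENNReal.coe_ne_zero.2 (hδ k).ne'))
  refine ⟨⟨z, ρ, hρ, hcover⟩, ?_⟩
  calc measure ⟨z, ρ, hρ, hcover⟩ β univ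
      = ∑' k, ENNReal.ofReal (τ * 2 ^ k) * ∑' i, ballCost β (ρ k i) := by
        simp only [measure_apply _ _ .univ, centerMeasure_univ]
    _ ≤ ∑' k, ENNReal.ofReal (τ * 2 ^ k) * (hContent n β (E k) + δ k) := by
        gcongr with k
        exact (hcost k).le
    _ = S + ∑' k, ENNReal.ofReal (τ * 2 ^ k) * δ k := by
        simp only [mul_add, ENNReal.tsum_add, hS, dyadicSum, E]
    _ < S + (M - S) := ENNReal.add_lt_add_left hM.ne_top hδM
    _ = M := add_tsub_cancel_of_le hM.le

lemma mul_hContent_doubled_le (c : DyadicCover n g τ) {β : ℝ} (hβ : β ≠ 0) (hτ : 0 ≤ τ) :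
    ENNReal.ofReal τ * hContent n β c.doubled ≤ ENNReal.ofReal (2 ^ β) * c.measure β univ := by
  calc ENNReal.ofReal τ * hContent n β c.doubled
      ≤ ENNReal.ofReal τ * ∑' k, hContent n β (⋃ i, ball (c.center k i) (2 * c.radius k i)) := by
        gcongr
        exact hContent_iUnion_le hβ _
    _ = ∑' k, ENNReal.ofReal τ * hContent n β (⋃ i, ball (c.center k i) (2 * c.radius k i)) :=
        ENNReal.tsum_mul_left.symm
    _ ≤ ∑' k, ENNReal.ofReal (τ * 2 ^ k) *
          (ENNReal.ofReal (2 ^ β) * centerMeasure β (c.center k) (c.radius k) univ) := by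
        gcongr with k
        · exact le_mul_of_one_le_right hτ (one_le_pow₀ one_le_two)
        · exact hContent_iUnion_ball_mul_le hβ zero_le_two (c.radius_nonneg k)
    _ = ENNReal.ofReal (2 ^ β) * c.measure β univ := by
        simp only [c.measure_apply β .univ, mul_left_comm (ENNReal.ofReal (τ * 2 ^ _)),
          ENNReal.tsum_mul_left]

lemma choquetOn_ball_le (c : DyadicCover n g τ) {β : ℝ} (hβ : β ≠ 0) (hτ : 0 < τ) {x : Rn n}
    (hx : x ∉ c.doubled) (r : ℝ) :
    choquetOn (hContent n β) (ball x r) g ≤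
      ENNReal.ofReal τ * ballCost β r + c.measure β (closedBall x (2 * r)) := by
  refine (choquetOn_le_add_dyadicSum (hContent_mono n β) (ball x r) g hτ).trans ?_
  rw [c.measure_apply β measurableSet_closedBall, dyadicSum]
  gcongr with k
  · exact hContent_ball_le hβ x r
  · exact hContent_ball_inter_le_centerMeasure hβ (c.superlevel_subset k)
      (fun hk => hx (mem_iUnion.2 ⟨k, hk⟩)) r

end DyadicCover

/-! ### The maximal function -/

lemma exists_mul_ballCost_lt_of_lt_maximalH {n : ℕ} {β : ℝ} (hβ : 0 < β) {g : Rn n → ℝ≥0∞}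
    {x : Rn n} {t : ℝ≥0∞} (ht : t < maximalH n β g x) :
    ∃ r : ℝ, 0 < r ∧ t * ballCost β r < choquetOn (hContent n β) (ball x r) g := by
  simp only [maximalH, lt_iSup_iff] at ht
  obtain ⟨r, hr, ht⟩ := ht
  rw [mul_comm, ← div_eq_mul_inv] at ht
  exact ⟨r, hr, (ENNReal.lt_div_iff_mul_lt (Or.inl (ballCost_pos hβ hr).ne')
    (Or.inl (ballCost_ne_top β r))).1 ht⟩

lemma DyadicCover.mul_hContent_maximalH_diff_doubled_le {n : ℕ} {g : Rn n → ℝ≥0∞} {τ : ℝ}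
    (c : DyadicCover n g τ) {β : ℝ} (hβ : 0 < β) (hτ : 0 < τ) :
    ENNReal.ofReal τ *
        hContent n β ({x | ENNReal.ofReal (2 * τ) < maximalH n β g x} \ c.doubled) ≤
      ENNReal.ofReal (10 ^ β) * c.measure β univ := by
  have hten : (10 : ℝ) = 5 * 2 := by norm_num
  rw [hten]
  refine mul_hContent_le_of_forall_exists_le_measure_closedBall hβ _ two_pos fun x hx => ?_
  obtain ⟨r, hr, hlt⟩ := exists_mul_ballCost_lt_of_lt_maximalH hβ hx.1
  refine ⟨r, hr, ?_⟩
  have hsum : ENNReal.ofReal τ * ballCost β r + ENNReal.ofReal τ * ballCost β r <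
      ENNReal.ofReal τ * ballCost β r + c.measure β (closedBall x (2 * r)) := by
    rw [← add_mul, ← ENNReal.ofReal_add hτ.le hτ.le, ← two_mul]
    exact hlt.trans_le (c.choquetOn_ball_le hβ.ne' hτ hx.2 r)
  exact (lt_of_add_lt_add_left hsum).le

lemma DyadicCover.mul_hContent_maximalH_le {n : ℕ} {g : Rn n → ℝ≥0∞} {τ : ℝ}
    (c : DyadicCover n g τ) {β : ℝ} (hβ : 0 < β) (hτ : 0 < τ) :
    ENNReal.ofReal τ * hContent n β {x | ENNReal.ofReal (2 * τ) < maximalH n β g x} ≤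
      ENNReal.ofReal (2 ^ β + 10 ^ β) * c.measure β univ := by
  set G : Set (Rn n) := {x | ENNReal.ofReal (2 * τ) < maximalH n β g x}
  have hG : hContent n β G ≤ hContent n β c.doubled + hContent n β (G \ c.doubled) :=
    (hContent_mono n β (by rw [union_sdiff_self]; exact subset_union_right)).trans
      (hContent_union_le hβ.ne' _ _)
  calc ENNReal.ofReal τ * hContent n β G
      ≤ ENNReal.ofReal τ * hContent n β c.doubled +
          ENNReal.ofReal τ * hContent n β (G \ c.doubled) := by
        rw [← mul_add]
        gcongr
    _ ≤ ENNReal.ofReal (2 ^ β) * c.measure β univ +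
          ENNReal.ofReal (10 ^ β) * c.measure β univ :=
        add_le_add (c.mul_hContent_doubled_le hβ.ne' hτ.le)
          (c.mul_hContent_maximalH_diff_doubled_le hβ hτ)
    _ = ENNReal.ofReal (2 ^ β + 10 ^ β) * c.measure β univ := by
        rw [← add_mul, ENNReal.ofReal_add (by positivity) (by positivity)]

lemma mul_hContent_maximalH_le_choquet {n : ℕ} {β : ℝ} (hβ : 0 < β) (g : Rn n → ℝ≥0∞) {τ : ℝ}
    (hτ : 0 < τ) :
    ENNReal.ofReal τ * hContent n β {x | ENNReal.ofReal (2 * τ) < maximalH n β g x} ≤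
      ENNReal.ofReal (2 ^ β + 10 ^ β) * (2 * choquet (hContent n β) g) := by
  have hK : ENNReal.ofReal (2 ^ β + 10 ^ β) ≠ 0 := (ENNReal.ofReal_pos.2 (by positivity)).ne'
  rw [mul_comm (ENNReal.ofReal (2 ^ β + 10 ^ β)),
    ← ENNReal.div_le_iff hK ENNReal.ofReal_ne_top]
  refine le_of_forall_gt_imp_ge_of_dense fun M hM => ?_
  obtain ⟨c, hc⟩ := DyadicCover.exists_measure_univ_lt hβ.ne' hτ
    ((dyadicSum_le_two_mul_choquet (hContent_mono n β) g hτ).trans_lt hM)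
  exact (ENNReal.div_le_of_le_mul' (c.mul_hContent_maximalH_le hβ hτ)).trans hc.le

theorem statement8_general (n : ℕ) {β : ℝ} (hβ : 0 < β) (g : Rn n → ℝ≥0∞) {t : ℝ} (ht : 0 < t) :
    hContent n β {x | ENNReal.ofReal t < maximalH n β g x} ≤
      (ENNReal.ofReal (4 * (2 ^ β + 10 ^ β)) / ENNReal.ofReal t) * choquet (hContent n β) g := by
  have hhalf := mul_hContent_maximalH_le_choquet hβ g (half_pos ht)
  rw [mul_div_cancel₀ t two_ne_zero] at hhalf
  have ht' : ENNReal.ofReal t = 2 * ENNReal.ofReal (t / 2) := by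
    rw [← ENNReal.ofReal_ofNat 2, ← ENNReal.ofReal_mul zero_le_two, mul_div_cancel₀ t two_ne_zero]
  rw [← ENNReal.mul_div_right_comm, ENNReal.le_div_iff_mul_le
    (Or.inl (ENNReal.ofReal_pos.2 ht).ne') (Or.inl ENNReal.ofReal_ne_top), mul_comm]
  calc ENNReal.ofReal t * hContent n β {x | ENNReal.ofReal t < maximalH n β g x}
      = 2 * (ENNReal.ofReal (t / 2) * hContent n β {x | ENNReal.ofReal t < maximalH n β g x}) := by
        rw [ht', mul_assoc]
    _ ≤ 2 * (ENNReal.ofReal (2 ^ β + 10 ^ β) * (2 * choquet (hContent n β) g)) := by gcongr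
    _ = ENNReal.ofReal (4 * (2 ^ β + 10 ^ β)) * choquet (hContent n β) g := by
        rw [ENNReal.ofReal_mul zero_le_four, ENNReal.ofReal_ofNat]
        ring

/-- Weak-type `(1,1)` bound for the centered Hausdorff content
maximal function on `L^1(H^β_∞)`, `β ∈ (0,n)`. -/
theorem statement8 (n : ℕ) (β : ℝ) (hβ0 : 0 < β) (hβn : β < n) :
    ∃ C : ℝ, 0 < C ∧ ∀ f : Rn n → ℝ, MemChoquetLp (hContent n β) 1 f →
      ∀ t : ℝ, 0 < t →
        hContent n β {x | ENNReal.ofReal t < maximalH n β (fun y => ENNReal.ofReal |f y|) x} ≤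
          (ENNReal.ofReal C / ENNReal.ofReal t) *
            choquet (hContent n β) (fun x => ENNReal.ofReal |f x|) :=
  ⟨4 * (2 ^ β + 10 ^ β), by positivity, fun f _ _ ht =>
    statement8_general n hβ0 (fun x => ENNReal.ofReal |f x|) ht⟩

end
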